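/- On ℝ³ with coordinates (x,y,z) (with cos y ≠ 0 and sin y ≠ 0), consider the de Sitter metric g = κ²(−cos²y·dx² + dy² + sin²y·dz²) for a constant κ > 0, which has scalar curvature τ = 6/κ². For any constants c₁, c₂ and any Λ ∈ ℝ, the function h(x,y,z) = −κ²Λ/2 + sin(y)(c₁cos(z) + c₂sin(z)) satisfies the vacuum weighted Einstein field equation h·ρ − Hes_h + (Δh + Λ)g = 0; moreover ‖∇h‖² = (1/κ²)(cos²(y)(c₂sin z + c₁cos z)² + (c₂cos z − c₁sin z)²) ≥ 0, so ∇h is spacelike or lightlike. -/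

import Mathlib

noncomputable section
open Matrix

/-- Points of the coordinate space `ℝⁿ`. -/
abbrev Pt (n : ℕ) := Fin n → ℝ

/-- Partial derivative `∂_i f` in the `i`-th coordinate direction. -/
def pd {n : ℕ} (i : Fin n) (f : Pt n → ℝ) (p : Pt n) : ℝ :=
  fderiv ℝ f p (Pi.single i 1)

/-- The inverse metric `g^{ij}` of a metric `g` given as a matrix of components. -/
def ginv {n : ℕ} (g : Pt n → Fin n → Fin n → ℝ) (p : Pt n) : Matrix (Fin n) (Fin n) ℝ :=
  (Matrix.of (g p))⁻¹

/-- Christoffel symbols `Γ^k_{ij}` of the Levi-Civita connection of `g`. -/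
def chr {n : ℕ} (g : Pt n → Fin n → Fin n → ℝ) (k i j : Fin n) (p : Pt n) : ℝ :=
  (1/2) * ∑ l, ginv g p k l *
    (pd i (fun q => g q l j) p + pd j (fun q => g q l i) p - pd l (fun q => g q i j) p)

/-- Components `R_{ij}` of the Ricci tensor of `g`. -/
def RicciT {n : ℕ} (g : Pt n → Fin n → Fin n → ℝ) (i j : Fin n) (p : Pt n) : ℝ :=
  (∑ k, pd k (fun q => chr g k i j q) p) - (∑ k, pd j (fun q => chr g k i k q) p)
  + (∑ k, ∑ l, chr g k k l p * chr g l i j p) - (∑ k, ∑ l, chr g k j l p * chr g l i k p)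

/-- Scalar curvature `τ = g^{ij} R_{ij}` of `g`. -/
def Scal {n : ℕ} (g : Pt n → Fin n → Fin n → ℝ) (p : Pt n) : ℝ :=
  ∑ i, ∑ j, ginv g p i j * RicciT g i j p

/-- Components of the Hessian `Hes_f` of a function `f` with respect to `g`. -/
def Hess {n : ℕ} (g : Pt n → Fin n → Fin n → ℝ) (f : Pt n → ℝ) (i j : Fin n) (p : Pt n) : ℝ :=
  pd i (fun q => pd j f q) p - ∑ k, chr g k i j p * pd k f p

/-- Laplacian `Δf = g^{ij}(Hes_f)_{ij}`. -/
def Lap {n : ℕ} (g : Pt n → Fin n → Fin n → ℝ) (f : Pt n → ℝ) (p : Pt n) : ℝ :=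
  ∑ i, ∑ j, ginv g p i j * Hess g f i j p

/-- Components of the gradient `∇f = g^{ij} ∂_j f ∂_i`. -/
def gradV {n : ℕ} (g : Pt n → Fin n → Fin n → ℝ) (f : Pt n → ℝ) (p : Pt n) (i : Fin n) : ℝ :=
  ∑ j, ginv g p i j * pd j f p

/-- `‖∇f‖² = g(∇f,∇f) = g^{ij} ∂_i f ∂_j f`. -/
def gradNorm2 {n : ℕ} (g : Pt n → Fin n → Fin n → ℝ) (f : Pt n → ℝ) (p : Pt n) : ℝ :=
  ∑ i, ∑ j, ginv g p i j * pd i f p * pd j f p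

/-- The vacuum weighted Einstein field equation
`h·ρ − Hes_h + (Δh + Λ)g = 0` at the point `p`. -/
def WEFEat {n : ℕ} (g : Pt n → Fin n → Fin n → ℝ) (h : Pt n → ℝ) (Λ : ℝ) (p : Pt n) : Prop :=
  ∀ i j, h p * RicciT g i j p - Hess g h i j p + (Lap g h p + Λ) * g p i j = 0

/-- The Ricci operator `Ric = g^{-1}·ρ` as a matrix (column `j` lists the
components of `Ric ∂_j`). -/
def RicOpM {n : ℕ} (g : Pt n → Fin n → Fin n → ℝ) (p : Pt n) : Matrix (Fin n) (Fin n) ℝ :=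
  Matrix.of fun i j => ∑ k, ginv g p i k * RicciT g k j p

/-- The `k`-th component of the covariant derivative `∇_{∂_i} V`. -/
def covD {n : ℕ} (g : Pt n → Fin n → Fin n → ℝ) (V : Pt n → Fin n → ℝ) (i k : Fin n)
    (p : Pt n) : ℝ :=
  pd i (fun q => V q k) p + ∑ m, chr g k i m p * V p m

/-- Components `R^l_{ijk}` of the (1,3)-curvature tensor:
`R(∂_i,∂_j)∂_k = R^l_{ijk} ∂_l`. -/
def RiemUp {n : ℕ} (g : Pt n → Fin n → Fin n → ℝ) (l i j k : Fin n) (p : Pt n) : ℝ :=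
  pd i (fun q => chr g l j k q) p - pd j (fun q => chr g l i k q) p
  + (∑ m, chr g l i m p * chr g m j k p) - (∑ m, chr g l j m p * chr g m i k p)

/-- The (0,4)-curvature tensor `R(∂_i,∂_j,∂_k,∂_l) = g(R(∂_i,∂_j)∂_k, ∂_l)`. -/
def RiemLow {n : ℕ} (g : Pt n → Fin n → Fin n → ℝ) (i j k l : Fin n) (p : Pt n) : ℝ :=
  ∑ m, g p l m * RiemUp g m i j k p

/-- A symmetric matrix of Lorentzian signature `(−,+,+)`. -/
def IsLorentz3 (A : Matrix (Fin 3) (Fin 3) ℝ) : Prop :=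
  A.IsSymm ∧ ∃ P : Matrix (Fin 3) (Fin 3) ℝ, IsUnit P.det ∧
    Pᵀ * A * P = Matrix.diagonal ![(-1 : ℝ), 1, 1]

/-- Jacobian matrix of a coordinate change `ψ`. -/
def jac {n : ℕ} (ψ : Pt n → Pt n) (q : Pt n) : Matrix (Fin n) (Fin n) ℝ :=
  Matrix.of fun i j => pd j (fun r => ψ r i) q

/-- Pullback `ψ^*g` of the metric `g` under the coordinate change `ψ`. -/
def pullback {n : ℕ} (g : Pt n → Fin n → Fin n → ℝ) (ψ : Pt n → Pt n) (q : Pt n) :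
    Matrix (Fin n) (Fin n) ℝ :=
  (jac ψ q)ᵀ * Matrix.of (g (ψ q)) * jac ψ q

/-- The 3-dimensional plane-wave metric `dv(2du − (α''(v)/α(v))x² dv) + dx²`
in coordinates `(u,v,x) = (q 0, q 1, q 2)`. -/
def planeWaveM (α : ℝ → ℝ) (q : Pt 3) : Matrix (Fin 3) (Fin 3) ℝ :=
  Matrix.of fun i j =>
    if i = 0 ∧ j = 1 then 1 else if i = 1 ∧ j = 0 then 1
    else if i = 1 ∧ j = 1 then -(deriv (deriv α) (q 1) / α (q 1)) * (q 2)^2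
    else if i = 2 ∧ j = 2 then 1 else 0


/-- The de Sitter metric `κ²(−cos²y dx² + dy² + sin²y dz²)` in coordinates
`(x,y,z) = (p 0, p 1, p 2)`. -/
def deSitterM (κ : ℝ) (p : Pt 3) : Fin 3 → Fin 3 → ℝ := fun i j =>
  if i = 0 ∧ j = 0 then -(κ^2 * Real.cos (p 1)^2)
  else if i = 1 ∧ j = 1 then κ^2
  else if i = 2 ∧ j = 2 then κ^2 * Real.sin (p 1)^2 else 0

lemma pd_of_hasFDerivAt {f : Pt 3 → ℝ} {f' : Pt 3 →L[ℝ] ℝ} {p : Pt 3} (i : Fin 3)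
    (h : HasFDerivAt f f' p) : pd i f p = f' (Pi.single i 1) := by
  unfold pd; rw [h.fderiv]

/-- partial derivatives of a function of the coordinate `y` only -/
lemma pd_comp1 {φ : ℝ → ℝ} {d : ℝ} {p : Pt 3} (i : Fin 3) (h : HasDerivAt φ d (p 1)) :
    pd i (fun q => φ (q 1)) p = if i = 1 then d else 0 := by
  have hp : HasFDerivAt (fun q : Pt 3 => q 1)
      (ContinuousLinearMap.proj (R := ℝ) (φ := fun _ : Fin 3 => ℝ) 1) p :=
    (ContinuousLinearMap.proj (R := ℝ) (φ := fun _ : Fin 3 => ℝ) 1).hasFDerivAt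
  have := h.comp_hasFDerivAt p hp
  refine (pd_of_hasFDerivAt i this).trans ?_
  fin_cases i <;> simp

lemma pd_comp2 {φ : ℝ → ℝ} {d : ℝ} {p : Pt 3} (i : Fin 3) (h : HasDerivAt φ d (p 2)) :
    pd i (fun q => φ (q 2)) p = if i = 2 then d else 0 := by
  have hp : HasFDerivAt (fun q : Pt 3 => q 2)
      (ContinuousLinearMap.proj (R := ℝ) (φ := fun _ : Fin 3 => ℝ) 2) p :=
    (ContinuousLinearMap.proj (R := ℝ) (φ := fun _ : Fin 3 => ℝ) 2).hasFDerivAt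
  have := h.comp_hasFDerivAt p hp
  refine (pd_of_hasFDerivAt i this).trans ?_
  fin_cases i <;> simp

/-- partial derivatives of a product `a + φ(y) ψ(z)` -/
lemma pd_sep {φ ψ : ℝ → ℝ} {a d e : ℝ} {p : Pt 3} (i : Fin 3) (h : HasDerivAt φ d (p 1))
    (h2 : HasDerivAt ψ e (p 2)) :
    pd i (fun q => a + φ (q 1) * ψ (q 2)) p =
      if i = 1 then d * ψ (p 2) else if i = 2 then φ (p 1) * e else 0 := by
  have hp (k : Fin 3) : HasFDerivAt (fun q : Pt 3 => q k)
      (ContinuousLinearMap.proj (R := ℝ) (φ := fun _ : Fin 3 => ℝ) k) p :=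
    (ContinuousLinearMap.proj (R := ℝ) (φ := fun _ : Fin 3 => ℝ) k).hasFDerivAt
  have h3 := ((h.comp_hasFDerivAt p (hp 1)).mul (h2.comp_hasFDerivAt p (hp 2))).const_add a
  have h4 := pd_of_hasFDerivAt i h3
  refine Eq.trans h4 ?_
  fin_cases i <;> simp [mul_comm]

lemma pd_const (i : Fin 3) (c : ℝ) (p : Pt 3) : pd i (fun _ => c) p = 0 := by
  simp [pd]

lemma pd_congr {f g : Pt 3 → ℝ} {p : Pt 3} (i : Fin 3) (h : f =ᶠ[nhds p] g) :
    pd i f p = pd i g p := by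
  unfold pd; rw [h.fderiv_eq]

lemma ginv_dS (κ : ℝ) (hκ : 0 < κ) (p : Pt 3) (hc : Real.cos (p 1) ≠ 0)
    (hs : Real.sin (p 1) ≠ 0) :
    ginv (deSitterM κ) p = Matrix.diagonal
      ![-(κ^2 * Real.cos (p 1)^2)⁻¹, (κ^2)⁻¹, (κ^2 * Real.sin (p 1)^2)⁻¹] := by
  unfold ginv
  apply Matrix.inv_eq_right_inv
  have hk : κ ≠ 0 := hκ.ne'
  ext i j
  fin_cases i <;> fin_cases j <;>
    simp [Matrix.mul_apply, Fin.sum_univ_three, deSitterM, Matrix.diagonal] <;> field_simp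

/-- derivatives of the metric -/
def dG (κ y : ℝ) (i a b : Fin 3) : ℝ :=
  if i = 1 ∧ a = 0 ∧ b = 0 then 2 * κ^2 * Real.cos y * Real.sin y
  else if i = 1 ∧ a = 2 ∧ b = 2 then 2 * κ^2 * Real.cos y * Real.sin y else 0

lemma pd_dS (κ : ℝ) (p : Pt 3) (i a b : Fin 3) :
    pd i (fun q => deSitterM κ q a b) p = dG κ (p 1) i a b := by
  have h1 : HasDerivAt (fun y => -(κ^2 * Real.cos y^2))
      (2 * κ^2 * Real.cos (p 1) * Real.sin (p 1)) (p 1) := by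
    refine ((((Real.hasDerivAt_cos (p 1)).pow 2).const_mul (κ^2)).neg).congr_deriv ?_
    simp; ring
  have h2 : HasDerivAt (fun y => κ^2 * Real.sin y^2)
      (2 * κ^2 * Real.cos (p 1) * Real.sin (p 1)) (p 1) := by
    refine ((((Real.hasDerivAt_sin (p 1)).pow 2).const_mul (κ^2))).congr_deriv ?_
    simp; ring
  have e1 := pd_comp1 i h1
  have e2 := pd_comp1 i h2
  fin_cases a <;> fin_cases b <;> simp [deSitterM, dG, pd_const, e1, e2]

/-- Christoffel symbols in closed form -/
def Ga (k i j : Fin 3) (y : ℝ) : ℝ :=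
  if k = 0 ∧ i = 0 ∧ j = 1 then -(Real.sin y / Real.cos y)
  else if k = 0 ∧ i = 1 ∧ j = 0 then -(Real.sin y / Real.cos y)
  else if k = 1 ∧ i = 0 ∧ j = 0 then -(Real.cos y * Real.sin y)
  else if k = 1 ∧ i = 2 ∧ j = 2 then -(Real.cos y * Real.sin y)
  else if k = 2 ∧ i = 1 ∧ j = 2 then Real.cos y / Real.sin y
  else if k = 2 ∧ i = 2 ∧ j = 1 then Real.cos y / Real.sin y
  else 0

def dGa (k i j : Fin 3) (y : ℝ) : ℝ :=
  if k = 0 ∧ i = 0 ∧ j = 1 then -(1 / Real.cos y^2)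
  else if k = 0 ∧ i = 1 ∧ j = 0 then -(1 / Real.cos y^2)
  else if k = 1 ∧ i = 0 ∧ j = 0 then Real.sin y^2 - Real.cos y^2
  else if k = 1 ∧ i = 2 ∧ j = 2 then Real.sin y^2 - Real.cos y^2
  else if k = 2 ∧ i = 1 ∧ j = 2 then -(1 / Real.sin y^2)
  else if k = 2 ∧ i = 2 ∧ j = 1 then -(1 / Real.sin y^2)
  else 0

lemma chr_dS (κ : ℝ) (hκ : 0 < κ) (p : Pt 3) (hc : Real.cos (p 1) ≠ 0)
    (hs : Real.sin (p 1) ≠ 0) (k i j : Fin 3) :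
    chr (deSitterM κ) k i j p = Ga k i j (p 1) := by
  have hk : κ ≠ 0 := hκ.ne'
  unfold chr
  rw [ginv_dS κ hκ p hc hs]
  simp only [pd_dS, Fin.sum_univ_three]
  fin_cases k <;> fin_cases i <;> fin_cases j <;>
    simp [Matrix.diagonal, dG, Ga] <;> field_simp <;> norm_num

lemma hasDerivAt_Ga (y : ℝ) (hc : Real.cos y ≠ 0) (hs : Real.sin y ≠ 0) (k i j : Fin 3) :
    HasDerivAt (Ga k i j) (dGa k i j y) y := by
  have t := Real.sin_sq_add_cos_sq y
  have h1 : HasDerivAt (fun y => -(Real.sin y / Real.cos y)) (-(1 / Real.cos y^2)) y := by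
    refine (((Real.hasDerivAt_sin y).div (Real.hasDerivAt_cos y) hc).neg).congr_deriv ?_
    rw [← t]; ring
  have h2 : HasDerivAt (fun y => -(Real.cos y * Real.sin y)) (Real.sin y^2 - Real.cos y^2) y := by
    refine (((Real.hasDerivAt_cos y).mul (Real.hasDerivAt_sin y)).neg).congr_deriv ?_
    ring
  have h3 : HasDerivAt (fun y => (Real.cos y / Real.sin y)) (-(1 / Real.sin y^2)) y := by
    refine (((Real.hasDerivAt_cos y).div (Real.hasDerivAt_sin y) hs)).congr_deriv ?_
    rw [← t]; ring
  have h0 : HasDerivAt (fun _ : ℝ => (0:ℝ)) 0 y := hasDerivAt_const y 0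
  unfold Ga dGa
  split_ifs <;> assumption

lemma pd_chr_dS (κ : ℝ) (hκ : 0 < κ) (p : Pt 3) (hc : Real.cos (p 1) ≠ 0)
    (hs : Real.sin (p 1) ≠ 0) (m k i j : Fin 3) :
    pd m (fun q => chr (deSitterM κ) k i j q) p = if m = 1 then dGa k i j (p 1) else 0 := by
  rw [← pd_comp1 m (hasDerivAt_Ga (p 1) hc hs k i j)]
  apply pd_congr
  have c1 : ContinuousAt (fun q : Pt 3 => Real.cos (q 1)) p :=
    (Real.continuous_cos.comp (continuous_apply 1)).continuousAt
  have c2 : ContinuousAt (fun q : Pt 3 => Real.sin (q 1)) p :=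
    (Real.continuous_sin.comp (continuous_apply 1)).continuousAt
  filter_upwards [c1.eventually_ne hc, c2.eventually_ne hs] with q h1 h2
  exact chr_dS κ hκ q h1 h2 k i j

lemma Ricci_dS (κ : ℝ) (hκ : 0 < κ) (p : Pt 3) (hc : Real.cos (p 1) ≠ 0)
    (hs : Real.sin (p 1) ≠ 0) (i j : Fin 3) :
    RicciT (deSitterM κ) i j p = 2 / κ^2 * deSitterM κ p i j := by
  have hk : κ ≠ 0 := hκ.ne'
  have t : Real.sin (p 1)^2 = 1 - Real.cos (p 1)^2 := Real.sin_sq (p 1)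
  have t3 : Real.sin (p 1)^3 = Real.sin (p 1) * (1 - Real.cos (p 1)^2) := by rw [← t]; ring
  have t4 : Real.sin (p 1)^4 = (1 - Real.cos (p 1)^2)^2 := by rw [← t]; ring
  unfold RicciT
  simp only [pd_chr_dS κ hκ p hc hs, chr_dS κ hκ p hc hs, Fin.sum_univ_three]
  fin_cases i <;> fin_cases j <;>
    simp [deSitterM, Ga, dGa] <;> field_simp <;> (try simp only [t, t3, t4]) <;> ring_nf <;>
    (try simp only [t, t3, t4]) <;> ring

lemma Hess_dS (κ a c₁ c₂ : ℝ) (hκ : 0 < κ) (p : Pt 3) (hc : Real.cos (p 1) ≠ 0)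
    (hs : Real.sin (p 1) ≠ 0) (i j : Fin 3) :
    Hess (deSitterM κ) (fun q => a +
          Real.sin (q 1) * (c₁ * Real.cos (q 2) + c₂ * Real.sin (q 2))) i j p =
      -(Real.sin (p 1) * (c₁ * Real.cos (p 2) + c₂ * Real.sin (p 2))) / κ^2
        * deSitterM κ p i j := by
  have hk : κ ≠ 0 := hκ.ne'
  have t : Real.sin (p 1)^2 = 1 - Real.cos (p 1)^2 := Real.sin_sq (p 1)
  have t3 : Real.sin (p 1)^3 = Real.sin (p 1) * (1 - Real.cos (p 1)^2) := by rw [← t]; ring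
  have t4 : Real.sin (p 1)^4 = (1 - Real.cos (p 1)^2)^2 := by rw [← t]; ring
  have hψ (z : ℝ) : HasDerivAt (fun z => c₁ * Real.cos z + c₂ * Real.sin z)
      (c₁ * (-Real.sin z) + c₂ * Real.cos z) z :=
    ((Real.hasDerivAt_cos z).const_mul c₁).add ((Real.hasDerivAt_sin z).const_mul c₂)
  have hψ' (z : ℝ) : HasDerivAt (fun z => c₁ * (-Real.sin z) + c₂ * Real.cos z)
      (c₁ * (-Real.cos z) + c₂ * (-Real.sin z)) z :=
    ((Real.hasDerivAt_sin z).neg.const_mul c₁).add ((Real.hasDerivAt_cos z).const_mul c₂)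
  have e (m : Fin 3) (q : Pt 3) := pd_sep (a := a) m (Real.hasDerivAt_sin (q 1)) (hψ (q 2))
  have e1 (m : Fin 3) := pd_sep (a := 0) m (Real.hasDerivAt_cos (p 1)) (hψ (p 2))
  have e2 (m : Fin 3) := pd_sep (a := 0) m (Real.hasDerivAt_sin (p 1)) (hψ' (p 2))
  simp only [zero_add] at e1 e2
  unfold Hess
  simp only [e, chr_dS κ hκ p hc hs, Fin.sum_univ_three]
  fin_cases j
  · fin_cases i <;> simp [deSitterM, Ga, pd_const] <;> field_simp
  · simp only [Fin.mk_one, if_true, e1]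
    fin_cases i <;> simp [deSitterM, Ga] <;> field_simp <;> ring
  · simp only [Fin.reduceFinMk, if_true, show (2 : Fin 3) ≠ 1 by decide, if_false, e2]
    fin_cases i <;> simp [deSitterM, Ga] <;> field_simp <;> (try simp only [t, t3, t4]) <;> ring_nf <;>
    (try simp only [t, t3, t4]) <;> ring

lemma Lap_of (κ a : ℝ) (hκ : 0 < κ) (p : Pt 3) (hc : Real.cos (p 1) ≠ 0)
    (hs : Real.sin (p 1) ≠ 0) :
    ∑ i, ∑ j, ginv (deSitterM κ) p i j * (a * deSitterM κ p i j) = 3 * a := by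
  have hk : κ ≠ 0 := hκ.ne'
  rw [ginv_dS κ hκ p hc hs]
  simp [Fin.sum_univ_three, Matrix.diagonal, deSitterM]
  field_simp
  ring

lemma grad_dS (κ a c₁ c₂ : ℝ) (hκ : 0 < κ) (p : Pt 3) (hc : Real.cos (p 1) ≠ 0)
    (hs : Real.sin (p 1) ≠ 0) :
    gradNorm2 (deSitterM κ) (fun q => a +
          Real.sin (q 1) * (c₁ * Real.cos (q 2) + c₂ * Real.sin (q 2))) p =
      (1 / κ^2) * (Real.cos (p 1)^2 *
            (c₂ * Real.sin (p 2) + c₁ * Real.cos (p 2))^2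
          + (c₂ * Real.cos (p 2) - c₁ * Real.sin (p 2))^2) := by
  have hk : κ ≠ 0 := hκ.ne'
  have hψ (z : ℝ) : HasDerivAt (fun z => c₁ * Real.cos z + c₂ * Real.sin z)
      (c₁ * (-Real.sin z) + c₂ * Real.cos z) z :=
    ((Real.hasDerivAt_cos z).const_mul c₁).add ((Real.hasDerivAt_sin z).const_mul c₂)
  have e (m : Fin 3) (q : Pt 3) := pd_sep (a := a) m (Real.hasDerivAt_sin (q 1)) (hψ (q 2))
  unfold gradNorm2
  rw [ginv_dS κ hκ p hc hs]
  simp only [e, Fin.sum_univ_three]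
  simp [Matrix.diagonal]
  field_simp
  ring

/-- On de Sitter 3-space (at points with `cos y ≠ 0` and
`sin y ≠ 0`) the scalar curvature is `6/κ²`, and for any constants `c₁, c₂`
and any `Λ`, the function `h = −κ²Λ/2 + sin y (c₁ cos z + c₂ sin z)`
satisfies the vacuum weighted Einstein field equation; moreover
`‖∇h‖² = (1/κ²)(cos²y (c₂ sin z + c₁ cos z)² + (c₂ cos z − c₁ sin z)²) ≥ 0`,
so `∇h` is spacelike or lightlike. -/
theorem deSitter_solutions (κ Λ c₁ c₂ : ℝ) (hκ : 0 < κ) :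
    ∀ p : Pt 3, Real.cos (p 1) ≠ 0 → Real.sin (p 1) ≠ 0 →
      Scal (deSitterM κ) p = 6 / κ^2 ∧
      WEFEat (deSitterM κ)
        (fun q => -(κ^2 * Λ) / 2 +
          Real.sin (q 1) * (c₁ * Real.cos (q 2) + c₂ * Real.sin (q 2))) Λ p ∧
      gradNorm2 (deSitterM κ)
        (fun q => -(κ^2 * Λ) / 2 +
          Real.sin (q 1) * (c₁ * Real.cos (q 2) + c₂ * Real.sin (q 2))) p =
        (1 / κ^2) * (Real.cos (p 1)^2 *
            (c₂ * Real.sin (p 2) + c₁ * Real.cos (p 2))^2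
          + (c₂ * Real.cos (p 2) - c₁ * Real.sin (p 2))^2) ∧
      0 ≤ gradNorm2 (deSitterM κ)
        (fun q => -(κ^2 * Λ) / 2 +
          Real.sin (q 1) * (c₁ * Real.cos (q 2) + c₂ * Real.sin (q 2))) p := by
  intro p hc hs
  have hk : κ ≠ 0 := hκ.ne'
  have hg := grad_dS κ (-(κ^2 * Λ) / 2) c₁ c₂ hκ p hc hs
  refine ⟨?_, ?_, hg, ?_⟩
  · unfold Scal
    simp only [Ricci_dS κ hκ p hc hs]
    rw [Lap_of κ _ hκ p hc hs]
    ring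
  · intro i j
    unfold Lap
    simp only [Ricci_dS κ hκ p hc hs, Hess_dS κ _ c₁ c₂ hκ p hc hs]
    rw [Lap_of κ _ hκ p hc hs]
    field_simp
    ring
  · rw [hg]; positivity
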